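/- Let −1 < β < 0 and ν > −1/2. Then sup_{x > 0} { ( e^{−βx} K_{ν+1}(x) / x^{ν−1} ) · ∫_0^x e^{βt} t^ν I_ν(t) dt } ≥ 1/(2(1+β)). -/

import Mathlib

open Real MeasureTheory

/-- Modified Bessel function of the first kind, `I_ν(x) = ∑_{k} (x/2)^{ν+2k} / (Γ(ν+k+1) k!)`. -/
noncomputable def besselI (ν x : ℝ) : ℝ :=
  ∑' k : ℕ, (x / 2) ^ (ν + 2 * (k : ℝ)) / (Real.Gamma (ν + (k : ℝ) + 1) * (Nat.factorial k : ℝ))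

/-- Modified Bessel function of the second kind, `K_ν(x) = ∫_0^∞ e^{-x cosh t} cosh(ν t) dt`. -/
noncomputable def besselK (ν x : ℝ) : ℝ :=
  ∫ t in Set.Ioi (0 : ℝ), Real.exp (-x * Real.cosh t) * Real.cosh (ν * t)

/-- Lower incomplete gamma function `γ(a, x) = ∫_0^x t^{a-1} e^{-t} dt`. -/
noncomputable def lowerIncGamma (a x : ℝ) : ℝ :=
  ∫ t in (0 : ℝ)..x, t ^ (a - 1) * Real.exp (-t)

/-!
Laplace's method applied to the integral defining `K_μ` gives `√x e^x K_μ(x) → √(π/2)`, and applied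
to Poisson's integral for `I_ν` it gives `√x e^{-x} I_ν(x) → 1/√(2π)`. By L'Hôpital's rule the
integral of `e^{βt} t^ν I_ν(t)` over `[0, x]` is therefore asymptotic to
`e^{(1+β)x} x^{ν-1/2} / (√(2π) (1 + β))`, so the function whose supremum is taken tends to
`1 / (2 (1 + β))` at infinity. This limit is at most the supremum once the function is known to be
bounded above on `(0, ∞)` (the real supremum of an unbounded set is `0`). Near infinity boundedness
follows from the limit, and elsewhere from `K_{ν+1}(x) ≤ 2^{ν+1} Γ(ν+1) x^{-ν-1}` and
`I_ν(x) ≤ (x/2)^ν cosh x / Γ(ν+1)`, which bound the function by `2 x e^x / (2ν + 1)`.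
-/

open Filter Set Topology

section LaplaceMethod

variable {φ ψ : ℝ → ℝ} {p a c κ C L : ℝ}

lemma rpow_mul_integral_exp_neg_mul_eq {r : ℝ} (hr : 0 < r) :
    r ^ (-(a + 1)) * ∫ t in Ioi 0, exp (-((r ^ p)⁻¹ * φ t)) * ψ t =
      ∫ s in Ioi 0, s ^ a * exp (-(s ^ p * (φ (r * s) / (r * s) ^ p))) *
        (ψ (r * s) / (r * s) ^ a) := by
  have hscale := integral_comp_mul_left_Ioi (fun t ↦ exp (-((r ^ p)⁻¹ * φ t)) * ψ t) 0 hr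
  rw [mul_zero, smul_eq_mul, eq_inv_mul_iff_mul_eq₀ hr.ne'] at hscale
  rw [← hscale, ← mul_assoc, ← rpow_add_one hr.ne', ← integral_const_mul]
  refine setIntegral_congr_fun measurableSet_Ioi fun s (hs : 0 < s) ↦ ?_
  simp only [mul_rpow hr.le hs.le, neg_add, neg_add_cancel_right, rpow_neg hr.le]
  field_simp

lemma norm_laplace_integrand_le {r s : ℝ} (hr : 0 < r) (hs : 0 < s)
    (hφ : ∀ t, 0 < t → c * t ^ p ≤ φ t)
    (hψ : ∀ t, 0 < t → |ψ t| ≤ C * t ^ a * exp (κ * t ^ p)) (hκ : κ * r ^ p ≤ c / 2) :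
    ‖s ^ a * exp (-(s ^ p * (φ (r * s) / (r * s) ^ p))) * (ψ (r * s) / (r * s) ^ a)‖ ≤
      C * (s ^ a * exp (-(c / 2) * s ^ p)) := by
  have hrs : 0 < r * s := mul_pos hr hs
  have hphase : c ≤ φ (r * s) / (r * s) ^ p := (le_div_iff₀ (by positivity)).2 (hφ _ hrs)
  have hamplitude : |ψ (r * s) / (r * s) ^ a| ≤ C * exp (κ * (r * s) ^ p) := by
    rw [abs_div, abs_of_pos (rpow_pos_of_pos hrs a), div_le_iff₀ (by positivity)]
    exact (hψ _ hrs).trans_eq (by ring)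
  have hC : 0 ≤ C := nonneg_of_mul_nonneg_left ((abs_nonneg _).trans hamplitude) (exp_pos _)
  rw [norm_mul, norm_of_nonneg (by positivity), norm_eq_abs]
  calc s ^ a * exp (-(s ^ p * (φ (r * s) / (r * s) ^ p))) * |ψ (r * s) / (r * s) ^ a|
      ≤ s ^ a * exp (-(s ^ p * c)) * (C * exp (κ * (r * s) ^ p)) := by gcongr
    _ = C * (s ^ a * exp ((κ * r ^ p - c) * s ^ p)) := by
      rw [sub_mul, sub_eq_add_neg, exp_add, mul_rpow hr.le hs.le]
      ring_nf
    _ ≤ C * (s ^ a * exp (-(c / 2) * s ^ p)) := by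
      gcongr
      linarith

lemma tendsto_integral_laplace_rescaled (hp : 0 < p) (ha : -1 < a) (hc : 0 < c)
    (hφ_meas : Measurable φ) (hψ_meas : Measurable ψ) (hφ : ∀ t, 0 < t → c * t ^ p ≤ φ t)
    (hφ_lim : Tendsto (fun t ↦ φ t / t ^ p) (𝓝[>] 0) (𝓝 c))
    (hψ : ∀ t, 0 < t → |ψ t| ≤ C * t ^ a * exp (κ * t ^ p))
    (hψ_lim : Tendsto (fun t ↦ ψ t / t ^ a) (𝓝[>] 0) (𝓝 L)) :
    Tendsto (fun r : ℝ ↦ ∫ s in Ioi 0,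
      s ^ a * exp (-(s ^ p * (φ (r * s) / (r * s) ^ p))) * (ψ (r * s) / (r * s) ^ a)) (𝓝[>] 0)
      (𝓝 (∫ s in Ioi 0, s ^ a * exp (-c * s ^ p) * L)) := by
  have hκ : ∀ᶠ r : ℝ in 𝓝[>] 0, κ * r ^ p ≤ c / 2 := by
    have hlim : Tendsto (fun r : ℝ ↦ κ * r ^ p) (𝓝[>] 0) (𝓝 0) := by
      simpa [hp.ne'] using (((continuous_rpow_const hp.le).tendsto 0).const_mul κ).mono_left
        nhdsWithin_le_nhds
    exact hlim.eventually_le_const (half_pos hc)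
  refine tendsto_integral_filter_of_dominated_convergence
    (fun s ↦ C * (s ^ a * exp (-(c / 2) * s ^ p)))
    (.of_forall fun r ↦ Measurable.aestronglyMeasurable (by fun_prop)) ?_
    ((integrableOn_rpow_mul_exp_neg_mul_rpow ha hp (half_pos hc)).const_mul C) ?_
  · filter_upwards [hκ, self_mem_nhdsWithin] with r hrκ hr
    filter_upwards [ae_restrict_mem measurableSet_Ioi] with s hs
    exact norm_laplace_integrand_le hr hs hφ hψ hrκ
  · filter_upwards [ae_restrict_mem measurableSet_Ioi] with s (hs : 0 < s)
    have hrs : Tendsto (fun r ↦ r * s) (𝓝[>] 0) (𝓝[>] 0) := by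
      refine tendsto_nhdsWithin_iff.2 ⟨?_, ?_⟩
      · simpa using (tendsto_id.mul_const s).mono_left (nhdsWithin_le_nhds (a := (0 : ℝ)))
      · filter_upwards [self_mem_nhdsWithin] with r hr using mul_pos hr hs
    rw [neg_mul, mul_comm c]
    exact ((((hφ_lim.comp hrs).const_mul _).neg.rexp).const_mul _).mul (hψ_lim.comp hrs)

theorem tendsto_rpow_mul_integral_exp_neg_mul (hp : 0 < p) (ha : -1 < a) (hc : 0 < c)
    (hφ_meas : Measurable φ) (hψ_meas : Measurable ψ) (hφ : ∀ t, 0 < t → c * t ^ p ≤ φ t)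
    (hφ_lim : Tendsto (fun t ↦ φ t / t ^ p) (𝓝[>] 0) (𝓝 c))
    (hψ : ∀ t, 0 < t → |ψ t| ≤ C * t ^ a * exp (κ * t ^ p))
    (hψ_lim : Tendsto (fun t ↦ ψ t / t ^ a) (𝓝[>] 0) (𝓝 L)) :
    Tendsto (fun x ↦ x ^ ((a + 1) / p) * ∫ t in Ioi 0, exp (-(x * φ t)) * ψ t) atTop
      (𝓝 (c ^ (-(a + 1) / p) * (1 / p) * Gamma ((a + 1) / p) * L)) := by
  rw [← integral_rpow_mul_exp_neg_mul_rpow hp ha hc, ← integral_mul_const]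
  have hroot : Tendsto (fun x : ℝ ↦ x ^ (-p⁻¹)) atTop (𝓝[>] 0) :=
    tendsto_nhdsWithin_iff.2 ⟨tendsto_rpow_neg_atTop (inv_pos.2 hp),
      (eventually_gt_atTop 0).mono fun x hx ↦ rpow_pos_of_pos hx _⟩
  refine ((tendsto_integral_laplace_rescaled hp ha hc hφ_meas hψ_meas hφ hφ_lim hψ
    hψ_lim).comp hroot).congr' ?_
  filter_upwards [eventually_gt_atTop 0] with x hx
  have hpow : ((x ^ (-p⁻¹)) ^ p)⁻¹ = x := by
    rw [← rpow_mul hx.le, neg_mul, inv_mul_cancel₀ hp.ne', rpow_neg_one, inv_inv]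
  rw [Function.comp_apply, ← rpow_mul_integral_exp_neg_mul_eq (rpow_pos_of_pos hx _), hpow,
    ← rpow_mul hx.le]
  ring_nf

end LaplaceMethod

section LHopital

lemma abs_intervalIntegral_sub_le_of_abs_div_sub_le {f G G' : ℝ → ℝ} {u v L ε : ℝ} (huv : u ≤ v)
    (hf : IntervalIntegrable f volume u v) (hG : ∀ t ∈ Icc u v, HasDerivAt G (G' t) t)
    (hG'_pos : ∀ t ∈ Icc u v, 0 < G' t) (hfG' : ∀ t ∈ Icc u v, |f t / G' t - L| ≤ ε) :
    |(∫ t in u..v, f t) - L * (G v - G u)| ≤ ε * (G v - G u) := by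
  rw [← uIcc_of_le huv] at hG
  have hG'_int : IntervalIntegrable G' volume u v :=
    intervalIntegral.intervalIntegrable_deriv_of_nonneg (HasDerivAt.continuousOn hG)
      (fun t ht ↦ hG t (Ioo_subset_Icc_self ht)) fun t ht ↦ by
        rw [min_eq_left huv, max_eq_right huv] at ht
        exact (hG'_pos t (Ioo_subset_Icc_self ht)).le
  rw [← intervalIntegral.integral_eq_sub_of_hasDerivAt hG hG'_int,
    ← intervalIntegral.integral_const_mul, ← intervalIntegral.integral_const_mul,
    ← intervalIntegral.integral_sub hf (hG'_int.const_mul L), ← norm_eq_abs]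
  refine intervalIntegral.norm_integral_le_of_norm_le huv (.of_forall fun t ht ↦ ?_)
    (hG'_int.const_mul ε)
  have hquot := hfG' t (Ioc_subset_Icc_self ht)
  have hpos := hG'_pos t (Ioc_subset_Icc_self ht)
  rwa [div_sub' hpos.ne', abs_div, abs_of_pos hpos, div_le_iff₀ hpos, mul_comm (G' t)] at hquot

theorem tendsto_intervalIntegral_div_atTop {f G G' : ℝ → ℝ} {d L : ℝ}
    (hf : ∀ᶠ x in atTop, IntervalIntegrable f volume d x)
    (hG : ∀ᶠ x in atTop, HasDerivAt G (G' x) x) (hG'_pos : ∀ᶠ x in atTop, 0 < G' x)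
    (hG_top : Tendsto G atTop atTop) (hfG' : Tendsto (fun x ↦ f x / G' x) atTop (𝓝 L)) :
    Tendsto (fun x ↦ (∫ t in d..x, f t) / G x) atTop (𝓝 L) := by
  suffices hlittleO : (fun x ↦ (∫ t in d..x, f t) - L * G x) =o[atTop] G by
    have hlim := hlittleO.tendsto_div_nhds_zero.add_const L
    rw [zero_add] at hlim
    refine hlim.congr' ?_
    filter_upwards [hG_top.eventually_gt_atTop 0] with x hx
    field_simp
    ring
  refine Asymptotics.isLittleO_iff.2 fun ε hε ↦ ?_
  have hclose : ∀ᶠ x in atTop, |f x / G' x - L| ≤ ε / 2 :=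
    (hfG'.sub_const L).abs.eventually_le_const (by simpa using half_pos hε)
  obtain ⟨T, hT⟩ := eventually_atTop.1 (hf.and (hG.and (hG'_pos.and hclose)))
  filter_upwards [eventually_ge_atTop T, hG_top.eventually_ge_atTop 0,
    hG_top.eventually_ge_atTop (2 / ε * |(∫ t in d..T, f t) - L * G T| - G T)]
    with x hTx hGx_nonneg hGx
  have hf_tail : IntervalIntegrable f volume T x := (hT T le_rfl).1.symm.trans (hT x hTx).1
  have htail := abs_intervalIntegral_sub_le_of_abs_div_sub_le hTx hf_tail
    (fun t ht ↦ (hT t ht.1).2.1) (fun t ht ↦ (hT t ht.1).2.2.1) fun t ht ↦ (hT t ht.1).2.2.2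
  rw [norm_eq_abs, norm_of_nonneg hGx_nonneg,
    ← intervalIntegral.integral_add_adjacent_intervals (hT T le_rfl).1 hf_tail]
  calc |(∫ t in d..T, f t) + (∫ t in T..x, f t) - L * G x|
      = |((∫ t in d..T, f t) - L * G T) + ((∫ t in T..x, f t) - L * (G x - G T))| := by ring_nf
    _ ≤ |(∫ t in d..T, f t) - L * G T| + ε / 2 * (G x - G T) :=
      (abs_add_le _ _).trans (by gcongr)
    _ ≤ ε * G x := by
      have := mul_le_mul_of_nonneg_left hGx (half_pos hε).le
      field_simp at this ⊢
      linarith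

lemma tendsto_intervalIntegral_div_exp_mul_rpow {f : ℝ → ℝ} {a b d L : ℝ} (hb : 0 < b)
    (hf : ∀ᶠ x in atTop, IntervalIntegrable f volume d x)
    (hL : Tendsto (fun x ↦ f x / (exp (b * x) * x ^ a)) atTop (𝓝 L)) :
    Tendsto (fun x ↦ (∫ t in d..x, f t) / (exp (b * x) * x ^ a)) atTop (𝓝 (L / b)) := by
  have hrate : Tendsto (fun x : ℝ ↦ b + a / x) atTop (𝓝 b) := by
    simpa using (tendsto_const_nhds.div_atTop tendsto_id).const_add b
  refine tendsto_intervalIntegral_div_atTop (G' := fun x ↦ exp (b * x) * x ^ a * (b + a / x))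
    hf ?_ ?_ ?_ ?_
  · filter_upwards [eventually_gt_atTop 0] with x hx
    refine (((hasDerivAt_id x).const_mul b).exp.mul
      (hasDerivAt_rpow_const (Or.inl hx.ne'))).congr_deriv ?_
    rw [rpow_sub_one hx.ne', id]
    ring
  · filter_upwards [eventually_gt_atTop 0, hrate.eventually_const_lt hb] with x hx hpos
    positivity
  · refine (tendsto_exp_mul_div_rpow_atTop (-a) b hb).congr' ?_
    filter_upwards [eventually_gt_atTop 0] with x hx
    rw [rpow_neg hx.le, div_inv_eq_mul]
  · refine (hL.div hrate hb.ne').congr fun x ↦ ?_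
    rw [Pi.div_apply, div_div]

end LHopital

section BesselK

lemma one_add_sq_div_two_le_cosh (t : ℝ) : 1 + t ^ 2 / 2 ≤ cosh t := by
  have h := sum_le_hasSum (Finset.range 2) (fun i _ ↦ by rw [pow_mul]; positivity) (hasSum_cosh t)
  simpa [Finset.sum_range_succ] using h

lemma tendsto_cosh_sub_one_div_sq :
    Tendsto (fun t : ℝ ↦ (cosh t - 1) / t ^ 2) (𝓝[≠] 0) (𝓝 (1 / 2)) := by
  have hderiv : HasDerivAt (fun t : ℝ ↦ sinh (t / 2)) (1 / 2) 0 := by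
    simpa using! ((hasDerivAt_id (0 : ℝ)).div_const 2).sinh
  have hslope : Tendsto (fun t : ℝ ↦ t⁻¹ * sinh (t / 2)) (𝓝[≠] 0) (𝓝 (1 / 2)) := by
    simpa using hderiv.tendsto_slope_zero
  have hsq := (hslope.pow 2).const_mul 2
  rw [show 2 * (1 / 2 : ℝ) ^ 2 = 1 / 2 by norm_num] at hsq
  refine hsq.congr fun t ↦ ?_
  have hcosh : cosh t - 1 = 2 * sinh (t / 2) ^ 2 := by
    have h := cosh_two_mul (t / 2)
    rw [mul_div_cancel₀ t two_ne_zero, cosh_sq] at h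
    linarith
  rw [hcosh, mul_pow, inv_pow]
  ring

lemma besselK_nonneg (μ x : ℝ) : 0 ≤ besselK μ x :=
  integral_nonneg fun _ ↦ mul_nonneg (exp_pos _).le (cosh_pos _).le

lemma besselK_le {μ x : ℝ} (hμ : 0 < μ) (hx : 0 < x) :
    besselK μ x ≤ 2 ^ μ * Gamma μ * x ^ (-μ) := by
  have hGamma := integral_rpow_mul_exp_neg_mul_Ioi hμ (half_pos hx)
  have hint : IntegrableOn (fun u : ℝ ↦ u ^ (μ - 1) * exp (-(x / 2 * u))) (Ioi 0) :=
    .of_integral_ne_zero (by rw [hGamma]; positivity)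
  have hmajorant : ∀ t ∈ Ioi (0 : ℝ), exp (-x * cosh t) * cosh (μ * t) ≤
      exp t • (exp t ^ (μ - 1) * exp (-(x / 2 * exp t))) := fun t (ht : 0 < t) ↦ by
    have hcosh : cosh (μ * t) ≤ exp (μ * t) := by
      linarith [sinh_add_cosh (μ * t), sinh_nonneg_iff.2 (mul_pos hμ ht).le]
    have hexp : exp (-x * cosh t) ≤ exp (-(x / 2 * exp t)) := by
      rw [exp_le_exp, cosh_eq]
      nlinarith [mul_pos hx (exp_pos (-t))]
    calc exp (-x * cosh t) * cosh (μ * t) ≤ exp (-(x / 2 * exp t)) * exp (μ * t) := by gcongr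
      _ = exp t • (exp t ^ (μ - 1) * exp (-(x / 2 * exp t))) := by
        rw [smul_eq_mul, ← exp_mul]
        simp only [← exp_add]
        ring_nf
  calc besselK μ x
      ≤ ∫ t in Ioi 0, exp t • (exp t ^ (μ - 1) * exp (-(x / 2 * exp t))) := by
        refine integral_mono_of_nonneg
          (.of_forall fun t ↦ mul_nonneg (exp_pos _).le (cosh_pos _).le) ?_
          ((ae_restrict_mem measurableSet_Ioi).mono hmajorant)
        exact (integrableOn_comp_exp_Ioi _ 0).2 (hint.mono_set (Ioi_subset_Ioi (exp_pos 0).le))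
    _ = ∫ u in Ioi (exp 0), u ^ (μ - 1) * exp (-(x / 2 * u)) :=
      integral_comp_exp_Ioi (fun u ↦ u ^ (μ - 1) * exp (-(x / 2 * u))) 0
    _ ≤ ∫ u in Ioi 0, u ^ (μ - 1) * exp (-(x / 2 * u)) := by
      refine setIntegral_mono_set hint ?_ (Ioi_subset_Ioi (exp_pos 0).le).eventuallyLE
      filter_upwards [ae_restrict_mem measurableSet_Ioi] with u (hu : 0 < u)
      positivity
    _ = 2 ^ μ * Gamma μ * x ^ (-μ) := by
      rw [hGamma, one_div_div, div_rpow zero_le_two hx.le, rpow_neg hx.le]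
      ring

theorem tendsto_sqrt_mul_exp_mul_besselK (μ : ℝ) :
    Tendsto (fun x ↦ √x * (exp x * besselK μ x)) atTop (𝓝 √(π / 2)) := by
  have hlim := tendsto_rpow_mul_integral_exp_neg_mul (φ := fun t ↦ cosh t - 1)
    (ψ := fun t ↦ cosh (μ * t)) (p := 2) (a := 0) (c := 1 / 2) (κ := μ ^ 2 / 2) (C := 1) (L := 1)
    two_pos (by norm_num) one_half_pos (by fun_prop) (by fun_prop)
    (fun t _ ↦ by rw [rpow_two]; linarith [one_add_sq_div_two_le_cosh t])
    (by simpa only [rpow_two] using tendsto_cosh_sub_one_div_sq.mono_left (nhdsGT_le_nhdsNE 0))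
    (fun t _ ↦ by
      rw [abs_of_pos (cosh_pos _), rpow_zero, one_mul, one_mul, rpow_two]
      exact (cosh_le_exp_half_sq _).trans_eq (by ring_nf))
    (by
      have hcont : Continuous fun t ↦ cosh (μ * t) := by fun_prop
      simpa using (hcont.tendsto 0).mono_left nhdsWithin_le_nhds)
  have hvalue : (1 / 2 : ℝ) ^ (-(0 + 1) / 2 : ℝ) * (1 / 2) * Gamma ((0 + 1) / 2) * 1 =
      √(π / 2) := by
    rw [zero_add, Gamma_one_half_eq, neg_div, rpow_neg one_half_pos.le, ← sqrt_eq_rpow, mul_one,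
      sqrt_div pi_pos.le, sqrt_div zero_le_one, sqrt_one]
    field_simp
    exact sq_sqrt zero_le_two
  rw [hvalue] at hlim
  refine hlim.congr fun x ↦ ?_
  rw [zero_add, ← sqrt_eq_rpow, besselK, ← integral_const_mul (exp x)]
  congr! 3
  rw [← mul_assoc, ← exp_add]
  ring_nf

end BesselK

section PoissonIntegral

lemma integral_rpow_mul_one_sub_rpow {p q : ℝ} (hp : 0 < p) (hq : 0 < q) :
    ∫ v in Ioo (0 : ℝ) 1, v ^ (p - 1) * (1 - v) ^ (q - 1) =
      Gamma p * Gamma q / Gamma (p + q) := by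
  have hbeta : ((∫ v in (0 : ℝ)..1, v ^ (p - 1) * (1 - v) ^ (q - 1) : ℝ) : ℂ) =
      Complex.betaIntegral p q := by
    rw [Complex.betaIntegral, ← intervalIntegral.integral_ofReal]
    refine intervalIntegral.integral_congr fun v hv ↦ ?_
    rw [uIcc_of_le zero_le_one] at hv
    push_cast [Complex.ofReal_cpow hv.1, Complex.ofReal_cpow (sub_nonneg.2 hv.2)]
    rfl
  rw [← integral_Ioc_eq_integral_Ioo, ← intervalIntegral.integral_of_le zero_le_one,
    ← ProbabilityTheory.beta, ProbabilityTheory.beta_eq_betaIntegralReal p q hp hq, ← hbeta,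
    Complex.ofReal_re]

lemma integral_pow_two_mul_mul_one_sub_sq_rpow {a : ℝ} (ha : -1 < a) (k : ℕ) :
    ∫ u in Ioo (0 : ℝ) 1, u ^ (2 * k) * (1 - u ^ 2) ^ a =
      Gamma (k + 1 / 2) * Gamma (a + 1) / (2 * Gamma (k + 1 / 2 + (a + 1))) := by
  have himage : (fun u : ℝ ↦ u ^ 2) '' Ioo 0 1 = Ioo 0 1 := by
    ext v
    refine ⟨?_, fun hv ↦
      ⟨√v, ⟨sqrt_pos.2 hv.1, (sqrt_lt' one_pos).2 (by rw [one_pow]; exact hv.2)⟩, sq_sqrt hv.1.le⟩⟩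
    rintro ⟨u, hu, rfl⟩
    exact ⟨pow_pos hu.1 2, pow_lt_one₀ hu.1.le hu.2 two_ne_zero⟩
  have hsubst := integral_image_eq_integral_abs_deriv_smul (s := Ioo (0 : ℝ) 1) measurableSet_Ioo
    (fun u _ ↦ (hasDerivAt_pow 2 u).hasDerivWithinAt)
    (fun u hu v hv huv ↦ (pow_left_inj₀ hu.1.le hv.1.le two_ne_zero).1 huv)
    fun v ↦ v ^ ((k : ℝ) + 1 / 2 - 1) * (1 - v) ^ (a + 1 - 1)
  rw [himage, integral_rpow_mul_one_sub_rpow (by positivity) (by linarith)] at hsubst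
  rw [div_mul_eq_div_div_swap, hsubst, eq_div_iff two_ne_zero, ← integral_mul_const]
  refine setIntegral_congr_fun measurableSet_Ioo fun u hu ↦ ?_
  have hpow : u * (u ^ 2) ^ ((k : ℝ) + 1 / 2 - 1) = u ^ (2 * k) := by
    rw [← rpow_two, ← rpow_mul hu.1.le, mul_comm u, ← rpow_add_one hu.1.ne',
      ← rpow_natCast]
    push_cast
    ring_nf
  simp only [← hpow, add_sub_cancel_right, smul_eq_mul, Nat.cast_ofNat, Nat.add_one_sub_one,
    pow_one]
  rw [abs_of_pos (by linarith [hu.1])]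
  ring

lemma integral_one_sub_sq_rpow {a : ℝ} (ha : -1 < a) :
    ∫ u in Ioo (0 : ℝ) 1, (1 - u ^ 2) ^ a = √π * Gamma (a + 1) / (2 * Gamma (a + 3 / 2)) := by
  have h := integral_pow_two_mul_mul_one_sub_sq_rpow ha 0
  simpa only [mul_zero, pow_zero, one_mul, Nat.cast_zero, zero_add, Gamma_one_half_eq,
    show 1 / 2 + (a + 1) = a + 3 / 2 by ring] using h

lemma integrableOn_one_sub_sq_rpow {a : ℝ} (ha : -1 < a) :
    IntegrableOn (fun u : ℝ ↦ (1 - u ^ 2) ^ a) (Ioo 0 1) := by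
  have : 0 < Gamma (a + 1) := Gamma_pos_of_pos (by linarith)
  have : 0 < Gamma (a + 3 / 2) := Gamma_pos_of_pos (by linarith)
  refine .of_integral_ne_zero ?_
  rw [integral_one_sub_sq_rpow ha]
  positivity

lemma one_sub_sq_nonneg {u : ℝ} (hu : u ∈ Ioo (0 : ℝ) 1) : 0 ≤ 1 - u ^ 2 :=
  sub_nonneg.2 (pow_le_one₀ hu.1.le hu.2.le)

/-- The integral `∫₀¹ (1 - u²)^a cosh (x u) du` of Poisson's representation of the modified Bessel
function of the first kind of order `a + 1/2`. -/
noncomputable def poissonIntegral (a x : ℝ) : ℝ :=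
  ∫ u in Ioo (0 : ℝ) 1, (1 - u ^ 2) ^ a * cosh (x * u)

lemma poissonIntegral_nonneg (a x : ℝ) : 0 ≤ poissonIntegral a x :=
  setIntegral_nonneg measurableSet_Ioo fun _ hu ↦
    mul_nonneg (rpow_nonneg (one_sub_sq_nonneg hu) a) (cosh_pos _).le

lemma measurable_poissonIntegral (a : ℝ) : Measurable (poissonIntegral a) := by
  have h : Measurable fun z : ℝ × ℝ ↦ (1 - z.2 ^ 2) ^ a * cosh (z.1 * z.2) := by fun_prop
  exact (h.stronglyMeasurable.integral_prod_right'
    (ν := volume.restrict (Ioo (0 : ℝ) 1))).measurable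

lemma poissonIntegral_le {a : ℝ} (ha : -1 < a) (x : ℝ) :
    poissonIntegral a x ≤ √π * Gamma (a + 1) / (2 * Gamma (a + 3 / 2)) * cosh x := by
  rw [← integral_one_sub_sq_rpow ha, ← integral_mul_const]
  refine integral_mono_of_nonneg ?_ ((integrableOn_one_sub_sq_rpow ha).mul_const _) ?_ <;>
    filter_upwards [ae_restrict_mem measurableSet_Ioo] with u hu
  · exact mul_nonneg (rpow_nonneg (one_sub_sq_nonneg hu) a) (cosh_pos _).le
  · refine mul_le_mul_of_nonneg_left ?_ (rpow_nonneg (one_sub_sq_nonneg hu) a)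
    rw [cosh_le_cosh, abs_mul, abs_of_pos hu.1]
    exact mul_le_of_le_one_right (abs_nonneg x) hu.2.le

lemma hasSum_poissonIntegral {a : ℝ} (ha : -1 < a) (x : ℝ) :
    HasSum (fun k : ℕ ↦ x ^ (2 * k) / (2 * k).factorial *
      (Gamma (k + 1 / 2) * Gamma (a + 1) / (2 * Gamma (k + 1 / 2 + (a + 1)))))
      (poissonIntegral a x) := by
  simp only [← integral_pow_two_mul_mul_one_sub_sq_rpow ha, ← integral_const_mul]
  refine hasSum_integral_of_dominated_convergence
    (fun k u ↦ (1 - u ^ 2) ^ a * (x ^ (2 * k) / (2 * k).factorial))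
    (fun k ↦ Measurable.aestronglyMeasurable (by fun_prop)) (fun k ↦ ?_)
    (.of_forall fun u ↦ (hasSum_cosh x).summable.mul_left _) ?_ (.of_forall fun u ↦ ?_)
  · filter_upwards [ae_restrict_mem measurableSet_Ioo] with u hu
    have hterm : 0 ≤ x ^ (2 * k) / (2 * k).factorial :=
      div_nonneg ((even_two_mul k).pow_nonneg x) (Nat.cast_nonneg _)
    have hweight := rpow_nonneg (one_sub_sq_nonneg hu) a
    have hu0 := hu.1
    rw [norm_of_nonneg (by positivity), mul_comm (_ ^ a)]
    exact mul_le_mul_of_nonneg_left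
      (mul_le_of_le_one_left hweight (pow_le_one₀ hu0.le hu.2.le)) hterm
  · simp only [tsum_mul_left]
    exact (integrableOn_one_sub_sq_rpow ha).mul_const _
  · refine ((hasSum_cosh (x * u)).mul_left ((1 - u ^ 2) ^ a)).congr_fun fun k ↦ ?_
    rw [mul_pow]
    ring

lemma rpow_le_one_add_rpow (a : ℝ) {y z : ℝ} (hy : 1 ≤ y) (hyz : y ≤ z) : y ^ a ≤ 1 + z ^ a := by
  have hy_pos : 0 < y := one_pos.trans_le hy
  rcases le_total 0 a with ha | ha
  · exact (rpow_le_rpow hy_pos.le hyz ha).trans (le_add_of_nonneg_left zero_le_one)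
  · exact (rpow_le_one_of_one_le_of_nonpos hy ha).trans
      (le_add_of_nonneg_right (rpow_nonneg (hy_pos.le.trans hyz) a))

lemma tendsto_rpow_mul_integral_exp_neg_mul_indicator {a : ℝ} (ha : -1 < a) :
    Tendsto (fun x ↦ x ^ (a + 1) *
      ∫ s in Ioi 0, exp (-(x * s)) * (Iio 1).indicator (fun s ↦ (s * (2 - s)) ^ a) s) atTop
      (𝓝 (2 ^ a * Gamma (a + 1))) := by
  have hquot : ∀ s ∈ Ioo (0 : ℝ) 1, (s * (2 - s)) ^ a / s ^ a = (2 - s) ^ a := fun s hs ↦ by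
    rw [mul_rpow hs.1.le (by linarith [hs.2]), mul_div_cancel_left₀ _ (rpow_pos_of_pos hs.1 a).ne']
  have hlim := tendsto_rpow_mul_integral_exp_neg_mul (φ := id)
    (ψ := (Iio 1).indicator fun s ↦ (s * (2 - s)) ^ a) (p := 1) (a := a) (c := 1) (κ := 0)
    (C := 1 + 2 ^ a) (L := 2 ^ a) one_pos ha one_pos measurable_id
    (Measurable.indicator (by fun_prop) measurableSet_Iio) (fun t _ ↦ by simp) ?_ (fun t ht ↦ ?_) ?_
  · simpa [mul_comm] using hlim
  · refine tendsto_const_nhds.congr' ?_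
    filter_upwards [self_mem_nhdsWithin] with t (ht : 0 < t)
    rw [id, rpow_one, div_self ht.ne']
  · rw [zero_mul, exp_zero, mul_one]
    by_cases ht1 : t < 1
    · have htwo_sub : 0 < 2 - t := by linarith
      rw [indicator_of_mem (mem_Iio.2 ht1), abs_of_nonneg (by positivity),
        ← div_le_iff₀ (by positivity), hquot t ⟨ht, ht1⟩]
      exact rpow_le_one_add_rpow a (by linarith) (by linarith)
    · rw [indicator_of_notMem (by simpa using ht1), abs_zero]
      positivity
  · have hcont : Tendsto (fun s : ℝ ↦ (2 - s) ^ a) (𝓝[>] 0) (𝓝 (2 ^ a)) := by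
      have h : ContinuousAt (fun s : ℝ ↦ (2 - s) ^ a) 0 :=
        ContinuousAt.rpow_const (by fun_prop) (Or.inl (by norm_num))
      simpa using h.tendsto.mono_left nhdsWithin_le_nhds
    refine hcont.congr' ?_
    filter_upwards [Ioo_mem_nhdsGT one_pos] with s hs
    rw [indicator_of_mem (mem_Iio.2 hs.2), hquot s hs]

-- The `exp (x u)` half of `cosh (x u)` concentrates at `u = 1`; the reflection `u = 1 - s` turns it
-- into a Laplace integral concentrated at `s = 0`. The other half is exponentially smaller.
lemma two_mul_exp_neg_mul_poissonIntegral {a : ℝ} (ha : -1 < a) (x : ℝ) :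
    2 * (exp (-x) * poissonIntegral a x) =
      (∫ s in Ioi 0, exp (-(x * s)) * (Iio 1).indicator (fun s ↦ (s * (2 - s)) ^ a) s) +
        exp (-x) * ∫ u in Ioo (0 : ℝ) 1, (1 - u ^ 2) ^ a * exp (-(x * u)) := by
  have hint (b : ℝ) : IntegrableOn (fun u ↦ (1 - u ^ 2) ^ a * exp (b * u)) (Ioo 0 1) :=
    (((integrableOn_Icc_iff_integrableOn_Ioo).2 (integrableOn_one_sub_sq_rpow ha)).mul_continuousOn
      (by fun_prop) isCompact_Icc).mono_set Ioo_subset_Icc_self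
  have hreflect : ∫ s in Ioi 0, exp (-(x * s)) * (Iio 1).indicator (fun s ↦ (s * (2 - s)) ^ a) s =
      exp (-x) * ∫ u in Ioo (0 : ℝ) 1, (1 - u ^ 2) ^ a * exp (x * u) := by
    have h := intervalIntegral.integral_comp_sub_left (a := 0) (b := 1)
      (fun u ↦ (1 - u ^ 2) ^ a * exp (x * u)) 1
    simp only [sub_self, sub_zero, intervalIntegral.integral_of_le zero_le_one,
      integral_Ioc_eq_integral_Ioo] at h
    simp only [← indicator_mul_right _ (fun s ↦ exp (-(x * s)))]
    rw [setIntegral_indicator measurableSet_Iio, Ioi_inter_Iio, ← h, ← integral_const_mul]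
    refine setIntegral_congr_fun measurableSet_Ioo fun s _ ↦ ?_
    rw [mul_left_comm, ← exp_add]
    ring_nf
  rw [hreflect, ← mul_add, mul_left_comm, poissonIntegral, ← integral_const_mul]
  simp only [← neg_mul]
  rw [← integral_add (hint x) (hint (-x))]
  congr! 3
  rw [cosh_eq, neg_mul]
  ring

theorem tendsto_rpow_mul_exp_neg_mul_poissonIntegral {a : ℝ} (ha : -1 < a) :
    Tendsto (fun x ↦ x ^ (a + 1) * (exp (-x) * poissonIntegral a x)) atTop
      (𝓝 (2 ^ a * Gamma (a + 1) / 2)) := by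
  have hsmall : Tendsto (fun x ↦ x ^ (a + 1) *
      (exp (-x) * ∫ u in Ioo (0 : ℝ) 1, (1 - u ^ 2) ^ a * exp (-(x * u)))) atTop (𝓝 0) := by
    have hdecay := (tendsto_rpow_mul_exp_neg_mul_atTop_nhds_zero (a + 1) 1 one_pos).mul_const
      (∫ u in Ioo (0 : ℝ) 1, (1 - u ^ 2) ^ a)
    rw [zero_mul] at hdecay
    refine tendsto_of_tendsto_of_tendsto_of_le_of_le' tendsto_const_nhds hdecay ?_ ?_ <;>
      filter_upwards [eventually_ge_atTop 0] with x hx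
    · have : 0 ≤ ∫ u in Ioo (0 : ℝ) 1, (1 - u ^ 2) ^ a * exp (-(x * u)) :=
        setIntegral_nonneg measurableSet_Ioo fun u hu ↦
          mul_nonneg (rpow_nonneg (one_sub_sq_nonneg hu) a) (exp_pos _).le
      positivity
    · rw [neg_one_mul, mul_assoc]
      gcongr _ * (_ * ?_)
      refine integral_mono_of_nonneg ?_ (integrableOn_one_sub_sq_rpow ha) ?_ <;>
        filter_upwards [ae_restrict_mem measurableSet_Ioo] with u hu
      · exact mul_nonneg (rpow_nonneg (one_sub_sq_nonneg hu) a) (exp_pos _).le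
      · exact mul_le_of_le_one_right (rpow_nonneg (one_sub_sq_nonneg hu) a)
          (exp_le_one_iff.2 (neg_nonpos.2 (mul_nonneg hx hu.1.le)))
  have hlim := ((tendsto_rpow_mul_integral_exp_neg_mul_indicator ha).add hsmall).div_const 2
  rw [add_zero] at hlim
  refine hlim.congr fun x ↦ ?_
  rw [← mul_add, ← two_mul_exp_neg_mul_poissonIntegral ha]
  ring

end PoissonIntegral

section BesselI

lemma Gamma_nat_add_half_mul_factorial (k : ℕ) :
    Gamma (k + 1 / 2) * k.factorial = (2 * k).factorial * √π / 2 ^ (2 * k) := by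
  have h := Real.Gamma_mul_Gamma_add_half (k + 1 / 2)
  rw [add_assoc, add_halves, Gamma_nat_eq_factorial,
    show 2 * ((k : ℝ) + 1 / 2) = (2 * k : ℕ) + 1 by push_cast; ring, Gamma_nat_eq_factorial] at h
  rw [h, sub_add_cancel_right, rpow_neg (by positivity), rpow_natCast]
  ring

theorem besselI_eq_mul_poissonIntegral {ν x : ℝ} (hν : -(1 / 2) < ν) (hx : 0 < x) :
    besselI ν x = (x / 2) ^ ν * (2 / (√π * Gamma (ν + 1 / 2))) * poissonIntegral (ν - 1 / 2) x := by
  rw [← ((hasSum_poissonIntegral (by linarith : -1 < ν - 1 / 2) x).mul_left _).tsum_eq, besselI]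
  refine tsum_congr fun k ↦ ?_
  have hGamma_half : Gamma (k + 1 / 2) = (2 * k).factorial * √π / 2 ^ (2 * k) / k.factorial :=
    eq_div_of_mul_eq (by positivity) (Gamma_nat_add_half_mul_factorial k)
  have hGamma : Gamma (ν + 1 / 2) ≠ 0 := (Gamma_pos_of_pos (by linarith)).ne'
  have hGamma_k : Gamma (ν + k + 1) ≠ 0 :=
    (Gamma_pos_of_pos (by linarith [k.cast_nonneg (α := ℝ)])).ne'
  have hpow : (x / 2) ^ (ν + 2 * k) = (x / 2) ^ ν * (x ^ (2 * k) / 2 ^ (2 * k)) := by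
    rw [rpow_add (half_pos hx), ← div_pow, ← rpow_natCast]
    push_cast
    rfl
  rw [hGamma_half, hpow, show ν - 1 / 2 + 1 = ν + 1 / 2 by ring,
    show (k : ℝ) + 1 / 2 + (ν + 1 / 2) = ν + k + 1 by ring]
  generalize Gamma (ν + 1 / 2) = G at hGamma ⊢
  field_simp

lemma besselI_nonneg {ν x : ℝ} (hν : -(1 / 2) < ν) (hx : 0 < x) : 0 ≤ besselI ν x := by
  have : 0 < ν + 1 / 2 := by linarith
  have := poissonIntegral_nonneg (ν - 1 / 2) x
  rw [besselI_eq_mul_poissonIntegral hν hx]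
  positivity

lemma besselI_le {ν x : ℝ} (hν : -(1 / 2) < ν) (hx : 0 < x) :
    besselI ν x ≤ (x / 2) ^ ν / Gamma (ν + 1) * cosh x := by
  have hGamma : 0 < Gamma (ν + 1 / 2) := Gamma_pos_of_pos (by linarith)
  have hbound := poissonIntegral_le (by linarith : -1 < ν - 1 / 2) x
  rw [show ν - 1 / 2 + 1 = ν + 1 / 2 by ring, show ν - 1 / 2 + 3 / 2 = ν + 1 by ring] at hbound
  rw [besselI_eq_mul_poissonIntegral hν hx]
  refine (mul_le_mul_of_nonneg_left hbound (by positivity)).trans_eq ?_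
  generalize Gamma (ν + 1 / 2) = G at hGamma ⊢
  field_simp

theorem tendsto_sqrt_mul_exp_neg_mul_besselI {ν : ℝ} (hν : -(1 / 2) < ν) :
    Tendsto (fun x ↦ √x * (exp (-x) * besselI ν x)) atTop (𝓝 (1 / √(2 * π))) := by
  have hGamma : 0 < Gamma (ν + 1 / 2) := Gamma_pos_of_pos (by linarith)
  have hlim := (tendsto_rpow_mul_exp_neg_mul_poissonIntegral
    (by linarith : -1 < ν - 1 / 2)).const_mul (2 / (2 ^ ν * √π * Gamma (ν + 1 / 2)))
  have hvalue : 2 / (2 ^ ν * √π * Gamma (ν + 1 / 2)) *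
      (2 ^ (ν - 1 / 2) * Gamma (ν - 1 / 2 + 1) / 2) = 1 / √(2 * π) := by
    rw [show ν - 1 / 2 + 1 = ν + 1 / 2 by ring, rpow_sub two_pos, ← sqrt_eq_rpow,
      sqrt_mul zero_le_two]
    generalize Gamma (ν + 1 / 2) = G at hGamma ⊢
    field_simp
  rw [hvalue] at hlim
  refine hlim.congr' ?_
  filter_upwards [eventually_gt_atTop 0] with x hx
  rw [besselI_eq_mul_poissonIntegral hν hx, sub_add_eq_add_sub, add_sub_assoc, rpow_add hx,
    div_rpow hx.le zero_le_two, sqrt_eq_rpow x]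
  norm_num
  ring

end BesselI

section ScaledBesselIntegral

variable {β ν x : ℝ}

lemma exp_mul_rpow_mul_besselI_le (hν : -(1 / 2) < ν) {t : ℝ} (ht : 0 < t) :
    exp (β * t) * t ^ ν * besselI ν t ≤
      exp ((1 + β) * t) * t ^ (2 * ν) / (2 ^ ν * Gamma (ν + 1)) := by
  have hGamma : 0 < Gamma (ν + 1) := Gamma_pos_of_pos (by linarith)
  have hcosh : cosh t ≤ exp t := by linarith [sinh_add_cosh t, sinh_nonneg_iff.2 ht.le]
  calc exp (β * t) * t ^ ν * besselI ν t
      ≤ exp (β * t) * t ^ ν * ((t / 2) ^ ν / Gamma (ν + 1) * exp t) := by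
        gcongr
        exact (besselI_le hν ht).trans (by gcongr)
    _ = exp ((1 + β) * t) * t ^ (2 * ν) / (2 ^ ν * Gamma (ν + 1)) := by
      rw [one_add_mul, exp_add, two_mul ν, rpow_add ht, div_rpow ht.le zero_le_two]
      field_simp

lemma exp_mul_rpow_mul_besselI_nonneg (hν : -(1 / 2) < ν) {t : ℝ} (ht : 0 < t) :
    0 ≤ exp (β * t) * t ^ ν * besselI ν t :=
  mul_nonneg (by positivity) (besselI_nonneg hν ht)

lemma intervalIntegrable_exp_mul_rpow_mul_besselI (hν : -(1 / 2) < ν) (hx : 0 < x) :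
    IntervalIntegrable (fun t ↦ exp (β * t) * t ^ ν * besselI ν t) volume 0 x := by
  have hmajorant : IntervalIntegrable
      (fun t ↦ t ^ (2 * ν) * (exp ((1 + β) * t) / (2 ^ ν * Gamma (ν + 1)))) volume 0 x :=
    (intervalIntegral.intervalIntegrable_rpow' (by linarith)).mul_continuousOn (by fun_prop)
  rw [intervalIntegrable_iff_integrableOn_Ioc_of_le hx.le] at hmajorant ⊢
  refine hmajorant.mono' ?_ ?_
  · have hmeas := measurable_poissonIntegral (ν - 1 / 2)
    have hpoisson : Measurable fun t ↦ exp (β * t) * t ^ ν *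
        ((t / 2) ^ ν * (2 / (√π * Gamma (ν + 1 / 2))) * poissonIntegral (ν - 1 / 2) t) := by
      fun_prop
    refine hpoisson.aestronglyMeasurable.congr ?_
    filter_upwards [ae_restrict_mem measurableSet_Ioc] with t ht
    rw [besselI_eq_mul_poissonIntegral hν ht.1]
  · filter_upwards [ae_restrict_mem measurableSet_Ioc] with t ht
    rw [norm_of_nonneg (exp_mul_rpow_mul_besselI_nonneg hν ht.1)]
    exact (exp_mul_rpow_mul_besselI_le hν ht.1).trans_eq (by ring)

lemma integral_exp_mul_rpow_mul_besselI_le (hβ : -1 ≤ β) (hν : -(1 / 2) < ν) (hx : 0 < x) :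
    ∫ t in (0 : ℝ)..x, exp (β * t) * t ^ ν * besselI ν t ≤
      exp ((1 + β) * x) / (2 ^ ν * Gamma (ν + 1)) * (x ^ (2 * ν + 1) / (2 * ν + 1)) := by
  have hGamma : 0 < Gamma (ν + 1) := Gamma_pos_of_pos (by linarith)
  have hpow : ∫ t in (0 : ℝ)..x, t ^ (2 * ν) = x ^ (2 * ν + 1) / (2 * ν + 1) := by
    rw [integral_rpow (Or.inl (by linarith)), zero_rpow (by linarith), sub_zero]
  rw [← hpow, ← intervalIntegral.integral_const_mul]
  refine intervalIntegral.integral_mono_on_of_le_Ioo hx.le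
    (intervalIntegrable_exp_mul_rpow_mul_besselI hν hx)
    ((intervalIntegral.intervalIntegrable_rpow' (by linarith)).const_mul _) fun t ht ↦ ?_
  refine (exp_mul_rpow_mul_besselI_le hν ht.1).trans ?_
  rw [mul_div_right_comm]
  have := ht.1
  gcongr
  · linarith
  · exact ht.2.le

lemma tendsto_integral_exp_mul_rpow_mul_besselI_div (hβ : -1 < β) (hν : -(1 / 2) < ν) :
    Tendsto (fun x ↦ (∫ t in (0 : ℝ)..x, exp (β * t) * t ^ ν * besselI ν t) /
      (exp ((1 + β) * x) * x ^ (ν - 1 / 2))) atTop (𝓝 (1 / √(2 * π) / (1 + β))) := by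
  refine tendsto_intervalIntegral_div_exp_mul_rpow (by linarith)
    ((eventually_gt_atTop 0).mono fun x ↦ intervalIntegrable_exp_mul_rpow_mul_besselI hν)
    ((tendsto_sqrt_mul_exp_neg_mul_besselI hν).congr' ?_)
  filter_upwards [eventually_gt_atTop 0] with x hx
  rw [one_add_mul, exp_add, rpow_sub hx, ← sqrt_eq_rpow, exp_neg]
  field_simp

/-- The function of `x` in `stmt_14`, whose supremum over `x > 0` is estimated; the prefactor
cancels the growth of the integral as `x → ∞`. -/
noncomputable def scaledBesselIntegral (β ν x : ℝ) : ℝ :=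
  (exp (-β * x) * besselK (ν + 1) x / x ^ (ν - 1)) *
    ∫ t in (0 : ℝ)..x, exp (β * t) * t ^ ν * besselI ν t

lemma tendsto_scaledBesselIntegral (hβ : -1 < β) (hν : -(1 / 2) < ν) :
    Tendsto (scaledBesselIntegral β ν) atTop (𝓝 (1 / (2 * (1 + β)))) := by
  have hlim := (tendsto_sqrt_mul_exp_mul_besselK (ν + 1)).mul
    (tendsto_integral_exp_mul_rpow_mul_besselI_div hβ hν)
  have hvalue : √(π / 2) * (1 / √(2 * π) / (1 + β)) = 1 / (2 * (1 + β)) := by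
    rw [sqrt_div pi_pos.le, sqrt_mul zero_le_two]
    field_simp
    rw [sq_sqrt zero_le_two]
  rw [hvalue] at hlim
  refine hlim.congr' ?_
  filter_upwards [eventually_gt_atTop 0] with x hx
  have hpow : x ^ (ν - 1 / 2) = √x * x ^ (ν - 1) := by
    rw [sqrt_eq_rpow, ← rpow_add hx]
    ring_nf
  rw [scaledBesselIntegral, hpow, one_add_mul, exp_add, neg_mul, exp_neg]
  field_simp

lemma scaledBesselIntegral_le (hβ : -1 ≤ β) (hν : -(1 / 2) < ν) (hx : 0 < x) :
    scaledBesselIntegral β ν x ≤ 2 * x * exp x / (2 * ν + 1) := by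
  have hGamma : 0 < Gamma (ν + 1) := Gamma_pos_of_pos (by linarith)
  have hpow : x ^ (2 * ν + 1) = x ^ (ν + 1) * x ^ (ν - 1) * x := by
    rw [← rpow_add hx, ← rpow_add_one hx.ne']
    ring_nf
  have := besselK_nonneg (ν + 1) x
  have : 0 < 2 * ν + 1 := by linarith
  calc scaledBesselIntegral β ν x
      ≤ exp (-β * x) * (2 ^ (ν + 1) * Gamma (ν + 1) * x ^ (-(ν + 1))) / x ^ (ν - 1) *
          (exp ((1 + β) * x) / (2 ^ ν * Gamma (ν + 1)) * (x ^ (2 * ν + 1) / (2 * ν + 1))) := by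
        refine mul_le_mul_of_nonneg ?_ (integral_exp_mul_rpow_mul_besselI_le hβ hν hx)
          (by positivity) (by positivity)
        gcongr
        exact besselK_le (by linarith) hx
    _ = 2 * x * exp x / (2 * ν + 1) := by
      rw [hpow, rpow_neg hx.le, one_add_mul, exp_add, neg_mul, exp_neg, rpow_add_one two_ne_zero]
      field_simp

lemma bddAbove_scaledBesselIntegral (hβ : -1 < β) (hν : -(1 / 2) < ν) :
    BddAbove (scaledBesselIntegral β ν '' Ioi 0) := by
  obtain ⟨M, hM⟩ := eventually_atTop.1
    ((tendsto_scaledBesselIntegral hβ hν).eventually_le_const (lt_add_one _))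
  refine ⟨max (1 / (2 * (1 + β)) + 1) (2 * M * exp M / (2 * ν + 1)), ?_⟩
  rintro _ ⟨x, hx : 0 < x, rfl⟩
  rcases le_total M x with hMx | hxM
  · exact (hM x hMx).trans (le_max_left _ _)
  · refine ((scaledBesselIntegral_le hβ.le hν hx).trans ?_).trans (le_max_right _ _)
    have : 0 < M := hx.trans_le hxM
    have : 0 < 2 * ν + 1 := by linarith
    gcongr

end ScaledBesselIntegral

theorem stmt_14_general (β ν : ℝ) (hβ : -1 < β) (hν : -(1 / 2) < ν) :
    1 / (2 * (1 + β)) ≤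
      sSup ((fun x ↦ (exp (-β * x) * besselK (ν + 1) x / x ^ (ν - 1)) *
        ∫ t in (0 : ℝ)..x, exp (β * t) * t ^ ν * besselI ν t) '' Ioi 0) :=
  le_of_tendsto (tendsto_scaledBesselIntegral hβ hν) <|
    (eventually_gt_atTop 0).mono fun _ hx ↦
      le_csSup (bddAbove_scaledBesselIntegral hβ hν) (mem_image_of_mem _ hx)

theorem stmt_14 (β ν : ℝ) (hβ0 : -1 < β) (hβ1 : β < 0) (hν : -(1/2) < ν) :
    sSup ((fun x : ℝ => (Real.exp (-β * x) * besselK (ν + 1) x / x ^ (ν - 1)) *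
        ∫ t in (0 : ℝ)..x, Real.exp (β * t) * t ^ ν * besselI ν t) '' Set.Ioi 0) ≥
      1 / (2 * (1 + β)) :=
  stmt_14_general β ν hβ0 hν
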